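/- Let A, B ∈ SL₂(ℂ) with tr(A) = tr(B) = x and tr(AB) = z, and let n be a positive integer. Then det(I + A·(AB)^{−n}·(BA)^n·A⁻¹) = det(I + (AB)^n·(BA)^{−n}) = 4 + (z−2)(z+2−x²)·S_{n−1}(z)². -/

import Mathlib

theorem aux_det (M : Matrix.SpecialLinearGroup (Fin 2) ℂ) :
    Matrix.det (1 + (M : Matrix (Fin 2) (Fin 2) ℂ)) = 2 + Matrix.trace (M : Matrix (Fin 2) (Fin 2) ℂ) := by
  have h := M.det_coe
  rw [Matrix.det_fin_two] at h
  rw [Matrix.det_fin_two, Matrix.trace_fin_two]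
  simp
  linear_combination h

theorem aux_inv (M : Matrix.SpecialLinearGroup (Fin 2) ℂ) :
    Matrix.trace ((M⁻¹ : Matrix.SpecialLinearGroup (Fin 2) ℂ) : Matrix (Fin 2) (Fin 2) ℂ)
      = Matrix.trace (M : Matrix (Fin 2) (Fin 2) ℂ) := by
  rw [Matrix.SpecialLinearGroup.coe_inv, Matrix.adjugate_fin_two, Matrix.trace_fin_two,
    Matrix.trace_fin_two]
  simp [add_comm]

theorem aux_comm (M N : Matrix.SpecialLinearGroup (Fin 2) ℂ) :
    Matrix.trace ((M * N : Matrix.SpecialLinearGroup (Fin 2) ℂ) : Matrix (Fin 2) (Fin 2) ℂ)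
      = Matrix.trace ((N * M : Matrix.SpecialLinearGroup (Fin 2) ℂ) : Matrix (Fin 2) (Fin 2) ℂ) := by
  rw [Matrix.SpecialLinearGroup.coe_mul, Matrix.SpecialLinearGroup.coe_mul, Matrix.trace_mul_comm]

theorem aux_pow (S : ℤ → ℂ → ℂ)
    (hS0 : ∀ z : ℂ, S 0 z = 1)
    (hS1 : ∀ z : ℂ, S 1 z = z)
    (hSrec : ∀ (j : ℤ) (z : ℂ), S (j + 1) z = z * S j z - S (j - 1) z)
    (M : Matrix.SpecialLinearGroup (Fin 2) ℂ) (z : ℂ)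
    (hz : Matrix.trace (M : Matrix (Fin 2) (Fin 2) ℂ) = z) (n : ℕ) :
    ((M ^ n : Matrix.SpecialLinearGroup (Fin 2) ℂ) : Matrix (Fin 2) (Fin 2) ℂ)
      = S ((n : ℤ) - 1) z • (M : Matrix (Fin 2) (Fin 2) ℂ) - S ((n : ℤ) - 2) z • 1 := by
  have h1 : S (-1) z = 0 := by
    have := hSrec 0 z
    simp only [hS0, hS1, zero_add, zero_sub, mul_one] at this
    linear_combination this
  have h2 : S (-2) z = -1 := by
    have := hSrec (-1) z
    norm_num [hS0, h1] at this
    linear_combination this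
  have hd := M.det_coe
  rw [Matrix.det_fin_two] at hd
  rw [Matrix.trace_fin_two] at hz
  induction n with
  | zero => simp [h1, h2]
  | succ k ih =>
    have hr := hSrec ((k : ℤ) - 1) z
    rw [sub_add_cancel, show (k : ℤ) - 1 - 1 = k - 2 by ring] at hr
    rw [pow_succ, Matrix.SpecialLinearGroup.coe_mul, ih,
      show ((k + 1 : ℕ) : ℤ) - 1 = k by push_cast; ring,
      show ((k + 1 : ℕ) : ℤ) - 2 = k - 1 by push_cast; ring, hr, ← hz]
    generalize S ((k : ℤ) - 1) _ = s
    generalize S ((k : ℤ) - 2) _ = t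
    ext i j
    fin_cases i <;> fin_cases j <;> simp [Matrix.mul_apply, Fin.sum_univ_two]
    · linear_combination (-s) * hd
    · ring
    · ring
    · linear_combination (-s) * hd

theorem aux_cas (S : ℤ → ℂ → ℂ)
    (hS0 : ∀ z : ℂ, S 0 z = 1)
    (hS1 : ∀ z : ℂ, S 1 z = z)
    (hSrec : ∀ (j : ℤ) (z : ℂ), S (j + 1) z = z * S j z - S (j - 1) z) (z : ℂ) (n : ℕ) :
    S ((n : ℤ) - 1) z ^ 2 - z * S ((n : ℤ) - 1) z * S ((n : ℤ) - 2) z + S ((n : ℤ) - 2) z ^ 2 = 1 := by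
  have h1 : S (-1) z = 0 := by
    have := hSrec 0 z
    simp only [hS0, hS1, zero_add, zero_sub, mul_one] at this
    linear_combination this
  have h2 : S (-2) z = -1 := by
    have := hSrec (-1) z
    norm_num [hS0, h1] at this
    linear_combination this
  induction n with
  | zero => simp [h1, h2]
  | succ k ih =>
    have hr := hSrec ((k : ℤ) - 1) z
    rw [sub_add_cancel, show (k : ℤ) - 1 - 1 = k - 2 by ring] at hr
    rw [show ((k + 1 : ℕ) : ℤ) - 1 = k by push_cast; ring,
      show ((k + 1 : ℕ) : ℤ) - 2 = k - 1 by push_cast; ring, hr]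
    linear_combination ih

theorem aux_fricke (A B : Matrix.SpecialLinearGroup (Fin 2) ℂ) (x z : ℂ)
    (hA : Matrix.trace (A : Matrix (Fin 2) (Fin 2) ℂ) = x)
    (hB : Matrix.trace (B : Matrix (Fin 2) (Fin 2) ℂ) = x)
    (hAB : Matrix.trace ((A * B : Matrix.SpecialLinearGroup (Fin 2) ℂ) : Matrix (Fin 2) (Fin 2) ℂ) = z) :
    Matrix.trace ((A * B * (B * A)⁻¹ : Matrix.SpecialLinearGroup (Fin 2) ℂ) : Matrix (Fin 2) (Fin 2) ℂ)
      = 2 + (z - 2) * (z + 2 - x ^ 2) := by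
  have e : A * B * (B * A)⁻¹ = (A * B) * (A⁻¹ * B⁻¹) := by group
  have key : ∀ M N : Matrix.SpecialLinearGroup (Fin 2) ℂ,
      Matrix.trace ((M * N : Matrix.SpecialLinearGroup (Fin 2) ℂ) : Matrix (Fin 2) (Fin 2) ℂ)
      + Matrix.trace ((M * N⁻¹ : Matrix.SpecialLinearGroup (Fin 2) ℂ) : Matrix (Fin 2) (Fin 2) ℂ)
      = Matrix.trace (M : Matrix (Fin 2) (Fin 2) ℂ) * Matrix.trace (N : Matrix (Fin 2) (Fin 2) ℂ) := by
    intro M N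
    simp only [Matrix.SpecialLinearGroup.coe_mul, Matrix.SpecialLinearGroup.coe_inv,
      Matrix.adjugate_fin_two, Matrix.trace_fin_two, Matrix.mul_apply, Fin.sum_univ_two]
    simp
    ring
  -- tr(AB A⁻¹ B⁻¹) = tr(ABA⁻¹) tr B - tr(ABA⁻¹B)
  have k1 := key (A * B * A⁻¹) B
  have c1 : Matrix.trace ((A * B * A⁻¹ : Matrix.SpecialLinearGroup (Fin 2) ℂ) : Matrix (Fin 2) (Fin 2) ℂ) = x := by
    rw [aux_comm, inv_mul_cancel_left, hB]
  have k2 := key (B * (A * B)) A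
  have c2 : Matrix.trace ((A * B * A⁻¹ * B : Matrix.SpecialLinearGroup (Fin 2) ℂ) : Matrix (Fin 2) (Fin 2) ℂ)
     = Matrix.trace ((B * (A * B) * A⁻¹ : Matrix.SpecialLinearGroup (Fin 2) ℂ) : Matrix (Fin 2) (Fin 2) ℂ) := by
    rw [aux_comm]; simp only [mul_assoc]
  have k3 := key (A * B) (A * B)
  have k4 := key (A * B) B
  have c4 : Matrix.trace ((A * B * B⁻¹ : Matrix.SpecialLinearGroup (Fin 2) ℂ) : Matrix (Fin 2) (Fin 2) ℂ) = x := by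
    rw [mul_inv_cancel_right, hA]
  have c5 := aux_comm B (A * B)
  have c6 : Matrix.trace ((B * (A * B) * A : Matrix.SpecialLinearGroup (Fin 2) ℂ) : Matrix (Fin 2) (Fin 2) ℂ)
     = Matrix.trace ((A * B * (A * B) : Matrix.SpecialLinearGroup (Fin 2) ℂ) : Matrix (Fin 2) (Fin 2) ℂ) := by
    rw [aux_comm]; simp only [mul_assoc]
  have c7 : Matrix.trace ((A * B * (A * B)⁻¹ : Matrix.SpecialLinearGroup (Fin 2) ℂ) : Matrix (Fin 2) (Fin 2) ℂ) = 2 := by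
    rw [mul_inv_cancel]; simp
  rw [c1, hB, c2] at k1
  rw [c5, c6, hA] at k2
  rw [c7, hAB] at k3
  rw [c4, hAB, hB] at k4
  rw [e, ← mul_assoc]
  linear_combination k1 - k2 + k3 - x * k4

/-- For `A, B ∈ SL₂(ℂ)` with `tr A = tr B = x`,
`tr (A * B) = z`, and a positive integer `n`, one has
`det (I + A * (A*B)^(-n) * (B*A)^n * A⁻¹) = det (I + (A*B)^n * (B*A)^(-n))
  = 4 + (z - 2) * (z + 2 - x²) * S (n-1) z ^ 2`,
where the `S j` are the Chebyshev-like polynomials with `S 0 = 1`, `S 1 = z`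
and `S (j+1) = z * S j - S (j-1)`. -/
theorem det_one_add_ABn_BAn_SL2
    (S : ℤ → ℂ → ℂ)
    (hS0 : ∀ z : ℂ, S 0 z = 1)
    (hS1 : ∀ z : ℂ, S 1 z = z)
    (hSrec : ∀ (j : ℤ) (z : ℂ), S (j + 1) z = z * S j z - S (j - 1) z)
    (A B : Matrix.SpecialLinearGroup (Fin 2) ℂ) (x z : ℂ)
    (hA : Matrix.trace (A : Matrix (Fin 2) (Fin 2) ℂ) = x)
    (hB : Matrix.trace (B : Matrix (Fin 2) (Fin 2) ℂ) = x)
    (hAB : Matrix.trace ((A * B : Matrix.SpecialLinearGroup (Fin 2) ℂ) : Matrix (Fin 2) (Fin 2) ℂ) = z)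
    (n : ℕ) (hn : 1 ≤ n) :
    Matrix.det
        (1 + ((A * (A * B) ^ (-(n : ℤ)) * (B * A) ^ (n : ℤ) * A⁻¹ :
            Matrix.SpecialLinearGroup (Fin 2) ℂ) : Matrix (Fin 2) (Fin 2) ℂ))
      = Matrix.det
        (1 + (((A * B) ^ (n : ℤ) * (B * A) ^ (-(n : ℤ)) :
            Matrix.SpecialLinearGroup (Fin 2) ℂ) : Matrix (Fin 2) (Fin 2) ℂ)) ∧
    Matrix.det
        (1 + (((A * B) ^ (n : ℤ) * (B * A) ^ (-(n : ℤ)) :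
            Matrix.SpecialLinearGroup (Fin 2) ℂ) : Matrix (Fin 2) (Fin 2) ℂ))
      = 4 + (z - 2) * (z + 2 - x ^ 2) * S ((n : ℤ) - 1) z ^ 2 := by
  have hBA : Matrix.trace ((B * A : Matrix.SpecialLinearGroup (Fin 2) ℂ) : Matrix (Fin 2) (Fin 2) ℂ) = z := by
    rw [aux_comm, hAB]
  constructor
  · rw [aux_det, aux_det, aux_comm, ← aux_inv, aux_comm ((A * B) ^ (n : ℤ))]
    have e : (A⁻¹ * (A * (A * B) ^ (-(n : ℤ)) * (B * A) ^ (n : ℤ)))⁻¹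
        = (B * A) ^ (-(n : ℤ)) * (A * B) ^ (n : ℤ) := by
      rw [mul_assoc A, inv_mul_cancel_left, mul_inv_rev, zpow_neg, zpow_neg, inv_inv]
    rw [e]
  · have hf := aux_fricke A B x z hA hB hAB
    have hc := aux_cas S hS0 hS1 hSrec z n
    rw [aux_det]
    rw [zpow_neg, zpow_natCast, zpow_natCast]
    have p1 := aux_pow S hS0 hS1 hSrec (A * B) z hAB n
    have p2 := aux_pow S hS0 hS1 hSrec (B * A) z hBA n
    generalize S ((n : ℤ) - 1) z = s at *
    generalize S ((n : ℤ) - 2) z = t at *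
    generalize A * B = P at *
    generalize B * A = Q at *
    rw [Matrix.SpecialLinearGroup.coe_mul, Matrix.SpecialLinearGroup.coe_inv, p1, p2]
    rw [Matrix.SpecialLinearGroup.coe_mul, Matrix.SpecialLinearGroup.coe_inv] at hf
    simp only [Matrix.adjugate_fin_two, Matrix.trace_fin_two, Matrix.mul_apply, Fin.sum_univ_two] at hf hAB hBA ⊢
    simp at hf ⊢
    linear_combination s ^ 2 * hf + 2 * hc - s * t * hAB - s * t * hBA
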